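/- arXiv:1106.2595 — 4 statements merged into one kernel-verified Lean document; each statement's English description precedes it below -/
import Mathlib

section
/- (Witt cancellation, algebraic form) Let F be a field of characteristic not equal to 2 and let n > 1. Let q_a = ⟨a₁, a₂, …, aₙ⟩ and q_b = ⟨b₁, b₂, …, bₙ⟩ be non-degenerate diagonal quadratic forms on Fⁿ (i.e., all aᵢ and bᵢ are nonzero), and assume a₁ = b₁. If q_a is isometric to q_b, then the (n−1)-ary forms ⟨a₂, …, aₙ⟩ and ⟨b₂, …, bₙ⟩ are isometric. -/
lemma wcd_inj {F : Type*} [Field F] (hF : (2 : F) ≠ 0) {m : ℕ} (a b : Fin m → F)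
    (ha : ∀ i, a i ≠ 0) (G : (Fin m → F) →ₗ[F] (Fin m → F))
    (hG : ∀ x, QuadraticMap.weightedSumSquares F b (G x) =
      QuadraticMap.weightedSumSquares F a x) :
    QuadraticMap.Equivalent (QuadraticMap.weightedSumSquares F a)
      (QuadraticMap.weightedSumSquares F b) := by
  have hinj : Function.Injective G := by
    rw [← LinearMap.ker_eq_bot, LinearMap.ker_eq_bot']
    intro x hx
    funext i
    have h1 := hG (x + Pi.single i 1)
    have h2 := hG (Pi.single i 1)
    have h3 := hG x
    rw [map_add, hx, zero_add, h2] at h1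
    rw [hx, map_zero] at h3
    have key : QuadraticMap.weightedSumSquares F a (x + Pi.single i 1) =
        QuadraticMap.weightedSumSquares F a x +
        QuadraticMap.weightedSumSquares F a (Pi.single i 1) + 2 * a i * x i := by
      have : 2 * a i * x i = ∑ j, 2 * a j * x j * (Pi.single i 1 : Fin m → F) j := by
        simp [Pi.single_apply]
      rw [this]
      simp only [QuadraticMap.weightedSumSquares_apply, ← Finset.sum_add_distrib]
      refine Finset.sum_congr rfl fun j _ => ?_
      simp only [Pi.add_apply, smul_eq_mul]
      ring
    rw [key, ← h3, zero_add] at h1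
    have h4 : 2 * a i * x i = 0 := by simpa using h1
    simpa [hF, ha i] using h4
  exact ⟨{ LinearEquiv.ofInjectiveEndo G hinj with map_app' := fun x => hG x }⟩

theorem wcd_succ {F : Type*} [Field F] (hF : (2 : F) ≠ 0)
    {m : ℕ} (a b : Fin (m+1) → F)
    (ha : ∀ i, a i ≠ 0) (hab : a 0 = b 0)
    (h : QuadraticMap.Equivalent (QuadraticMap.weightedSumSquares F a)
      (QuadraticMap.weightedSumSquares F b)) :
    QuadraticMap.Equivalent
      (QuadraticMap.weightedSumSquares F (fun i : Fin m => a i.succ))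
      (QuadraticMap.weightedSumSquares F (fun i : Fin m => b i.succ)) := by
  obtain ⟨e⟩ := h
  let L : (Fin (m+1) → F) →ₗ[F] (Fin (m+1) → F) := e.toLinearEquiv.toLinearMap
  have hL : ∀ x, QuadraticMap.weightedSumSquares F b (L x) =
      QuadraticMap.weightedSumSquares F a x := fun x => e.map_app x
  clear_value L
  let J : (Fin m → F) →ₗ[F] (Fin (m+1) → F) :=
    { toFun := fun x => Fin.cons 0 x
      map_add' := fun x y => by
        funext i; refine Fin.cases ?_ (fun j => ?_) i <;> simp
      map_smul' := fun c x => by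
        funext i; refine Fin.cases ?_ (fun j => ?_) i <;> simp }
  have hJ0 : ∀ x, J x 0 = 0 := fun x => rfl
  have hJs : ∀ x i, J x (Fin.succ i) = x i := fun x i => rfl
  clear_value J
  let v : Fin (m+1) → F := Pi.single 0 1
  obtain ⟨ε, hε, hne⟩ : ∃ ε : F, ε ^ 2 = 1 ∧ ε - L v 0 ≠ 0 := by
    by_cases h1 : (1 : F) - L v 0 = 0
    · refine ⟨-1, by ring, fun h2 => hF ?_⟩
      linear_combination h1 - h2
    · exact ⟨1, by ring, h1⟩
  let K : (Fin m → F) →ₗ[F] (Fin (m+1) → F) :=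
    J + (((ε - L v 0)⁻¹ • (LinearMap.proj 0 ∘ₗ L ∘ₗ J)).smulRight v)
  have hK : ∀ x, K x = J x + ((ε - L v 0)⁻¹ * L (J x) 0) • v := fun x => rfl
  have hK0 : ∀ x, K x 0 = (ε - L v 0)⁻¹ * L (J x) 0 := by
    intro x; simp [hK, hJ0, v]
  have hKs : ∀ x i, K x (Fin.succ i) = x i := by
    intro x i; simp [hK, hJs, v]
  have hLK : ∀ x, L (K x) 0 = ε * K x 0 := by
    intro x
    rw [hK0, hK, map_add, map_smul]
    simp only [Pi.add_apply, Pi.smul_apply, smul_eq_mul]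
    field_simp
    ring
  refine wcd_inj hF _ _ (fun i => ha _)
    ((LinearMap.funLeft F F Fin.succ) ∘ₗ L ∘ₗ K) fun x => ?_
  have := hL (K x)
  simp only [QuadraticMap.weightedSumSquares_apply, Fin.sum_univ_succ, hLK, hKs, smul_eq_mul] at this
  simp only [QuadraticMap.weightedSumSquares_apply, LinearMap.comp_apply,
    LinearMap.funLeft_apply, smul_eq_mul]
  rw [hab] at this
  linear_combination this - b 0 * (K x 0)^2 * hε

/-- Witt cancellation for diagonal quadratic forms: if `⟨a₁, …, aₙ⟩ ≅ ⟨b₁, …, bₙ⟩`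
are non-degenerate diagonal forms with `a₁ = b₁`, then `⟨a₂, …, aₙ⟩ ≅ ⟨b₂, …, bₙ⟩`. -/
theorem witt_cancellation_diagonal {F : Type*} [Field F] (hF : (2 : F) ≠ 0)
    {n : ℕ} (hn : 1 < n) (a b : Fin n → F)
    (ha : ∀ i, a i ≠ 0) (hb : ∀ i, b i ≠ 0)
    (hab : a ⟨0, by omega⟩ = b ⟨0, by omega⟩)
    (h : QuadraticMap.Equivalent (QuadraticMap.weightedSumSquares F a)
      (QuadraticMap.weightedSumSquares F b)) :
    QuadraticMap.Equivalent
      (QuadraticMap.weightedSumSquares F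
        (fun i : Fin (n - 1) => a ⟨i.val + 1, by have := i.isLt; omega⟩))
      (QuadraticMap.weightedSumSquares F
        (fun i : Fin (n - 1) => b ⟨i.val + 1, by have := i.isLt; omega⟩)) := by
  obtain ⟨m, rfl⟩ : ∃ m, n = m + 1 := ⟨n - 1, by omega⟩
  exact wcd_succ hF a b ha hab h
end

section
/- (Witt cancellation, general form) Let F be a field of characteristic not equal to 2, and let q, q₁, q₂ be quadratic forms on finite-dimensional F-vector spaces with q non-degenerate. If the orthogonal sum q ⊥ q₁ is isometric to the orthogonal sum q ⊥ q₂, then q₁ is isometric to q₂. -/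
open QuadraticMap in
theorem witt_refl {F W : Type*} [Field F] [AddCommGroup W] [Module F W]
    (P : QuadraticForm F W) (d : W) (hd : P d ≠ 0) :
    ∃ s : P.IsometryEquiv P, ∀ y, s y = y - ((P d)⁻¹ * polar P d y) • d := by
  have hf : ((P d)⁻¹ • polarBilin P d) d = 2 := by
    simp [polar_self]
    field_simp
  refine ⟨⟨Module.reflection hf, fun y => ?_⟩, fun y => ?_⟩
  · show P (Module.reflection hf y) = P y
    rw [Module.reflection_apply, sub_eq_add_neg, ← neg_smul, QuadraticMap.map_add P, QuadraticMap.map_smul,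
      polar_smul_right, polar_comm P y d]
    simp
    field_simp
    ring
  · show Module.reflection hf y = _
    rw [Module.reflection_apply]
    simp

open QuadraticMap in
theorem witt_move {F W : Type*} [Field F] [AddCommGroup W] [Module F W] (hF : (2 : F) ≠ 0)
    (P : QuadraticForm F W) (u e : W) (hu : P u = P e) (he : P e ≠ 0) :
    ∃ s : P.IsometryEquiv P, s u = e := by
  have h1 : P (u - e) = 2 * P e - polar P u e := by
    rw [sub_eq_add_neg, QuadraticMap.map_add P, QuadraticMap.map_neg, polar_neg_right, hu]; ring
  have h2 : P (u + e) = 2 * P e + polar P u e := by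
    rw [QuadraticMap.map_add P, hu]; ring
  by_cases h : P (u - e) = 0
  · have h' : P (u + e) ≠ 0 := by
      intro h3
      have : (2 * 2) * P e = 0 := by linear_combination h3 - h2 + h - h1
      exact mul_ne_zero (mul_ne_zero hF hF) he this
    obtain ⟨s, hs⟩ := witt_refl P (u + e) h'
    have hsu : s u = -e := by
      have : polar P (u + e) u = P (u + e) := by
        rw [polar_add_left, polar_self, polar_comm P e u, h2, hu]; simp
      rw [hs, this, inv_mul_cancel₀ h']; simp
    refine ⟨s.trans ⟨LinearEquiv.neg F, fun m => by simp⟩, ?_⟩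
    show -(s u) = e
    simp [hsu]
  · obtain ⟨s, hs⟩ := witt_refl P (u - e) h
    refine ⟨s, ?_⟩
    have : polar P (u - e) u = P (u - e) := by
      rw [polar_sub_left, polar_self, polar_comm P e u, h1, hu]; simp
    rw [hs, this, inv_mul_cancel₀ h]; simp

open QuadraticMap in
theorem witt_fix {F V₁ V₂ : Type*} [Field F] (hF : (2 : F) ≠ 0)
    [AddCommGroup V₁] [Module F V₁] [AddCommGroup V₂] [Module F V₂]
    (R : QuadraticForm F F) (hR : R 1 ≠ 0)
    (Q₁ : QuadraticForm F V₁) (Q₂ : QuadraticForm F V₂)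
    (g : (R.prod Q₁).IsometryEquiv (R.prod Q₂)) (hg : g (1, 0) = (1, 0)) (v : V₁) :
    g (0, v) = (0, (g (0, v)).2) := by
  have h : polar (R.prod Q₂) (g (1, 0)) (g (0, v)) = polar (R.prod Q₁) (1, 0) (0, v) := by
    simp only [polar, ← g.map_app, _root_.map_add]
  rw [hg] at h
  have h3 : polar R 1 ((g (0, v)).1) = (g (0, v)).1 * (2 * R 1) := by
    have := polar_smul_right (Q := R) (a := (g (0, v)).1) (x := (1 : F)) (y := (1 : F))
    rw [polar_self] at this
    simpa using this
  simp [h3, hF, hR] at h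
  exact Prod.ext h rfl

open QuadraticMap in
theorem witt_one {F V₁ V₂ : Type*} [Field F] (hF : (2 : F) ≠ 0)
    [AddCommGroup V₁] [Module F V₁] [AddCommGroup V₂] [Module F V₂]
    (R : QuadraticForm F F) (hR : R 1 ≠ 0)
    (Q₁ : QuadraticForm F V₁) (Q₂ : QuadraticForm F V₂)
    (h : Equivalent (R.prod Q₁) (R.prod Q₂)) : Equivalent Q₁ Q₂ := by
  obtain ⟨f⟩ := h
  obtain ⟨s, hs⟩ := witt_move hF (R.prod Q₂) (f (1, 0)) (1, 0)
    (by rw [f.map_app]; simp) (by simpa using hR)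
  obtain ⟨g, hg⟩ : ∃ g : (R.prod Q₁).IsometryEquiv (R.prod Q₂), g (1, 0) = (1, 0) :=
    ⟨f.trans s, hs⟩
  have hg' : g.symm (1, 0) = (1, 0) := by rw [← hg, g.symm_apply_apply]
  have k1 := witt_fix hF R hR Q₁ Q₂ g hg
  have k2 := witt_fix hF R hR Q₂ Q₁ g.symm hg'
  refine ⟨⟨LinearEquiv.ofLinearMap
    (LinearMap.snd F F V₂ ∘ₗ g.toLinearEquiv.toLinearMap ∘ₗ LinearMap.inr F F V₁)
    (LinearMap.snd F F V₁ ∘ₗ g.symm.toLinearEquiv.toLinearMap ∘ₗ LinearMap.inr F F V₂)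
    ?_ ?_, ?_⟩⟩
  · ext v
    show (g (0, (g.symm (0, v)).2)).2 = v
    rw [← k2, g.apply_symm_apply]
  · ext v
    show (g.symm (0, (g (0, v)).2)).2 = v
    rw [← k1, g.symm_apply_apply]
  · intro v
    show Q₂ (g (0, v)).2 = Q₁ v
    have := g.map_app (0, v)
    rw [k1] at this
    simpa using this

open QuadraticMap in
theorem witt_split {F V : Type*} [Field F] [AddCommGroup V] [Module F V]
    (Q : QuadraticForm F V) (n : ℕ) (w : Fin (n + 1) → Fˣ) :
    Equivalent ((weightedSumSquares F w).prod Q)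
      (((w 0 : F) • (QuadraticMap.sq : QuadraticForm F F)).prod
        ((weightedSumSquares F (fun i => w (Fin.succ i))).prod Q)) := by
  refine ⟨⟨LinearEquiv.ofLinearMap
    (((LinearMap.proj 0) ∘ₗ LinearMap.fst F _ _).prod
      (((LinearMap.funLeft F F Fin.succ) ∘ₗ LinearMap.fst F _ _).prod (LinearMap.snd F _ _)))
    ((((Fin.consLinearEquiv F (fun _ => F)).toLinearMap ∘ₗ
      (LinearMap.fst F _ _).prod (LinearMap.fst F _ _ ∘ₗ LinearMap.snd F _ _))).prod
      (LinearMap.snd F _ _ ∘ₗ LinearMap.snd F _ _)) ?_ ?_, ?_⟩⟩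
  · refine LinearMap.ext fun ⟨a, b, c⟩ => ?_
    simp [Fin.consLinearEquiv, LinearMap.funLeft, Function.comp_def]
  · refine LinearMap.ext fun ⟨a, b⟩ => ?_
    refine Prod.ext (funext fun i => ?_) rfl
    refine Fin.cases ?_ (fun i => ?_) i <;> simp [Fin.consLinearEquiv, LinearMap.funLeft]
  · rintro ⟨a, b⟩
    simp [weightedSumSquares_apply, Fin.sum_univ_succ, LinearMap.funLeft, add_assoc, Units.smul_def]

open QuadraticMap in
theorem witt_sum {F V₁ V₂ : Type*} [Field F] (hF : (2 : F) ≠ 0)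
    [AddCommGroup V₁] [Module F V₁] [AddCommGroup V₂] [Module F V₂]
    (Q₁ : QuadraticForm F V₁) (Q₂ : QuadraticForm F V₂) (n : ℕ) (w : Fin n → Fˣ)
    (h : Equivalent ((weightedSumSquares F w).prod Q₁) ((weightedSumSquares F w).prod Q₂)) :
    Equivalent Q₁ Q₂ := by
  induction n with
  | zero =>
    obtain ⟨g⟩ := h
    refine ⟨⟨(LinearEquiv.uniqueProd (R := F) (M₂ := Fin 0 → F)).symm ≪≫ₗ g.toLinearEquiv ≪≫ₗ
      LinearEquiv.uniqueProd, fun v => ?_⟩⟩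
    have := g.map_app (default, v)
    rw [prod_apply, prod_apply] at this
    simp only [weightedSumSquares_apply, Finset.univ_eq_empty, Finset.sum_empty, zero_add] at this
    exact this
  | succ n ih =>
    refine ih (fun i => w i.succ) ?_
    exact witt_one hF ((w 0 : F) • (QuadraticMap.sq : QuadraticForm F F)) (by simp) _ _
      (((witt_split Q₁ n w).symm.trans h).trans (witt_split Q₂ n w))


/-- Witt cancellation, general form: if `q` is non-degenerate and `q ⊥ q₁ ≅ q ⊥ q₂`,
then `q₁ ≅ q₂`. Non-degeneracy is stated via the associated bilinear form
`B(v,w) = (q(v+w) − q(v) − q(w))/2`. -/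
theorem witt_cancellation_general {F V V₁ V₂ : Type*} [Field F]
    [AddCommGroup V] [Module F V] [FiniteDimensional F V]
    [AddCommGroup V₁] [Module F V₁] [FiniteDimensional F V₁]
    [AddCommGroup V₂] [Module F V₂] [FiniteDimensional F V₂]
    (hF : (2 : F) ≠ 0)
    (Q : QuadraticForm F V) (Q₁ : QuadraticForm F V₁) (Q₂ : QuadraticForm F V₂)
    (hQ : ∀ v : V, (∀ w : V, QuadraticMap.polar Q v w / 2 = 0) → v = 0)
    (h : QuadraticMap.Equivalent (Q.prod Q₁) (Q.prod Q₂)) :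
    QuadraticMap.Equivalent Q₁ Q₂ := by
  have : Invertible (2 : F) := invertibleOfNonzero hF
  obtain ⟨w, hw⟩ := QuadraticForm.equivalent_weightedSumSquares_units_of_nondegenerate' Q (by
    intro v hv
    refine hQ v fun w => ?_
    have := hv w
    rw [QuadraticMap.associated_apply] at this
    simpa [QuadraticMap.polar, hF] using this)
  exact witt_sum hF Q₁ Q₂ _ w
    (((hw.symm.prod (QuadraticMap.Equivalent.refl Q₁)).trans h).trans
      (hw.prod (QuadraticMap.Equivalent.refl Q₂)))
end

section
/- (Witt decomposition, existence) Let F be a field of characteristic not equal to 2 and let (V, q) be a non-degenerate quadratic space over F. Then there is a decomposition V ≅ H₁ ⊥ H₂ ⊥ ⋯ ⊥ H_k ⊥ V_a, where each Hᵢ is a hyperbolic plane (a two-dimensional form equivalent to ⟨1, −1⟩), k ≥ 0, and V_a is anisotropic (q is nonzero on every nonzero vector of V_a). -/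
open QuadraticMap in
theorem witt_split_s11 {F V : Type*} [Field F] [AddCommGroup V]
    [Module F V] (hF : (2 : F) ≠ 0)
    (Q : QuadraticForm F V) (v w : V) (hv : Q v = 0) (hw : Q w = 0) (hvw : polar Q v w = 1)
    (W : Submodule F V) (hW : ∀ x, x ∈ W ↔ polar Q v x = 0 ∧ polar Q w x = 0) :
    QuadraticMap.Equivalent Q
      ((QuadraticMap.weightedSumSquares F (![1, -1] : Fin 2 → F)).prod (Q.comp W.subtype)) := by
  have hwv : polar Q w v = 1 := by rw [polar_comm, hvw]
  have hvv : polar Q v v = 0 := by rw [polar_self, hv]; simp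
  have hww : polar Q w w = 0 := by rw [polar_self, hw]; simp
  have hadd : ∀ x y, Q (x + y) = Q x + Q y + polar Q x y := fun x y => by simp [polar]
  let g : ((Fin 2 → F) × W) →ₗ[F] V :=
    { toFun := fun p => (p.1 0 + p.1 1) • v + (p.1 0 - p.1 1) • w + (p.2 : V)
      map_add' := by intro p q; simp; module
      map_smul' := by intro c p; simp; module }
  have hg : ∀ p, g p = (p.1 0 + p.1 1) • v + (p.1 0 - p.1 1) • w + (p.2 : V) := fun _ => rfl
  have hgv : ∀ p, polar Q v (g p) = p.1 0 - p.1 1 := by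
    intro p
    simp [hg, polar_add_right, polar_smul_right, hvv, hvw, ((hW p.2).1 p.2.2).1]
  have hgw : ∀ p, polar Q w (g p) = p.1 0 + p.1 1 := by
    intro p
    simp [hg, polar_add_right, polar_smul_right, hww, hwv, ((hW p.2).1 p.2.2).2]
  have hbij : Function.Bijective g := by
    constructor
    · rw [injective_iff_map_eq_zero]
      intro p hp
      have h1 := hgv p
      have h2 := hgw p
      rw [hp, polar_zero_right] at h1 h2
      have h0 : p.1 0 = 0 := by
        have : 2 * p.1 0 = 0 := by linear_combination - h1 - h2
        exact (mul_eq_zero.1 this).resolve_left hF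
      have h3 : p.1 1 = 0 := by linear_combination - h2 - h0
      have h4 : (p.2 : V) = 0 := by
        have := hg p
        rw [hp, h0, h3] at this
        simpa using this.symm
      refine Prod.ext ?_ (Subtype.ext h4)
      ext i
      fin_cases i
      · exact h0
      · exact h3
    · intro x
      refine ⟨(![(polar Q w x + polar Q v x) / 2, (polar Q w x - polar Q v x) / 2],
        ⟨x - polar Q w x • v - polar Q v x • w, ?_⟩), ?_⟩
      · rw [hW]
        constructor
        · simp [polar_sub_right, polar_smul_right, hvv, hvw]
        · simp [polar_sub_right, polar_smul_right, hww, hwv]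
      · rw [hg]
        have e1 : (polar Q w x + polar Q v x) / 2 + (polar Q w x - polar Q v x) / 2
          = polar Q w x := by field_simp; ring
        have e2 : (polar Q w x + polar Q v x) / 2 - (polar Q w x - polar Q v x) / 2
          = polar Q v x := by field_simp; ring
        simp only [Matrix.cons_val_zero, Matrix.cons_val_one, e1, e2]
        abel
  refine QuadraticMap.Equivalent.symm ⟨⟨LinearEquiv.ofBijective g hbij, ?_⟩⟩
  intro p
  change Q (g p) = _
  rw [hg, hadd, hadd]
  simp [QuadraticMap.map_smul, hv, hw, polar_add_left, polar_smul_left, polar_smul_right, hvw,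
    ((hW p.2).1 p.2.2).1, ((hW p.2).1 p.2.2).2, weightedSumSquares_apply, Fin.sum_univ_two]
  ring

theorem witt_assemble {F V : Type*} [Field F] [AddCommGroup V] [Module F V]
    (h : QuadraticForm F V) (k m : ℕ) (qa : QuadraticForm F (Fin m → F)) :
    QuadraticMap.Equivalent (h.prod ((QuadraticMap.pi fun _ : Fin k => h).prod qa))
      ((QuadraticMap.pi fun _ : Fin (k + 1) => h).prod qa) := by
  refine ⟨⟨(LinearEquiv.prodAssoc F V (Fin k → V) (Fin m → F)).symm.trans
    (LinearEquiv.prodCongr (Fin.consLinearEquiv F (fun _ : Fin (k + 1) => V))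
      (LinearEquiv.refl F _)), ?_⟩⟩
  rintro ⟨a, b, c⟩
  simp [QuadraticMap.pi_apply, Fin.sum_univ_succ, add_assoc]
  rfl

theorem witt_aux {F : Type*} [Field F] (hF : (2 : F) ≠ 0) (n : ℕ) :
    ∀ {V : Type*} [AddCommGroup V] [Module F V] [FiniteDimensional F V]
    (Q : QuadraticForm F V) (_ : Module.finrank F V = n)
    (_ : ∀ v : V, (∀ w : V, QuadraticMap.polar Q v w = 0) → v = 0),
    ∃ (k m : ℕ) (qa : QuadraticForm F (Fin m → F)),
      qa.Anisotropic ∧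
      QuadraticMap.Equivalent Q
        ((QuadraticMap.pi fun _ : Fin k =>
          QuadraticMap.weightedSumSquares F (![1, -1] : Fin 2 → F)).prod qa) := by
  induction n using Nat.strong_induction_on with
  | _ n ih =>
  intro V _ _ _ Q hn hQ
  by_cases ha : Q.Anisotropic
  · let e : V ≃ₗ[F] (Fin (Module.finrank F V) → F) := (Module.finBasis F V).equivFun
    refine ⟨0, Module.finrank F V, Q.comp e.symm.toLinearMap, ?_, ?_⟩
    · intro x hx
      have := ha (e.symm x) hx
      simpa using this
    · refine QuadraticMap.Equivalent.symm ⟨⟨(LinearEquiv.uniqueProd).trans e.symm, ?_⟩⟩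
      rintro ⟨a, b⟩
      simp [QuadraticMap.pi_apply]
  · obtain ⟨v, hv, hv0⟩ : ∃ v, Q v = 0 ∧ v ≠ 0 := by
      simpa [QuadraticMap.Anisotropic] using ha
    obtain ⟨u, hu⟩ : ∃ u, QuadraticMap.polar Q v u ≠ 0 := by
      by_contra! h
      exact hv0 (hQ v h)
    obtain ⟨w, hw, hvw⟩ : ∃ w, Q w = 0 ∧ QuadraticMap.polar Q v w = 1 := by
      let u' := (QuadraticMap.polar Q v u)⁻¹ • u
      have hu' : QuadraticMap.polar Q v u' = 1 := by
        simp [u', QuadraticMap.polar_smul_right, hu]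
      have hvv : QuadraticMap.polar Q v v = 0 := by rw [QuadraticMap.polar_self, hv]; simp
      clear_value u'
      refine ⟨u' + (-Q u') • v, ?_, ?_⟩
      · rw [QuadraticMap.map_add Q, QuadraticMap.map_smul, QuadraticMap.polar_smul_right,
          QuadraticMap.polar_comm, hu', hv]
        simp
      · rw [QuadraticMap.polar_add_right, QuadraticMap.polar_smul_right, hu', hvv]
        simp
    let W : Submodule F V := LinearMap.ker (Q.polarBilin v) ⊓ LinearMap.ker (Q.polarBilin w)
    have hW : ∀ x, x ∈ W ↔ QuadraticMap.polar Q v x = 0 ∧ QuadraticMap.polar Q w x = 0 := by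
      intro x
      simp [W]
    have hlt : Module.finrank F W < n := by
      rw [← hn]
      apply Submodule.finrank_lt
      intro ht
      have : w ∈ W := by rw [ht]; trivial
      have := ((hW w).1 this).1
      rw [hvw] at this
      exact one_ne_zero this
    have hsplit := witt_split_s11 hF Q v w hv hw hvw W hW
    have hnd : ∀ y : W, (∀ z : W, QuadraticMap.polar (Q.comp W.subtype) y z = 0) → y = 0 := by
      intro y hy
      have hy' : ∀ z ∈ W, QuadraticMap.polar Q y z = 0 := fun z hz => by
        simpa [QuadraticMap.polar] using hy ⟨z, hz⟩
      have hyv : QuadraticMap.polar Q y v = 0 := by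
        rw [QuadraticMap.polar_comm]; exact ((hW y).1 y.2).1
      have hyw : QuadraticMap.polar Q y w = 0 := by
        rw [QuadraticMap.polar_comm]; exact ((hW y).1 y.2).2
      apply Subtype.ext
      apply hQ
      intro x
      have hwv : QuadraticMap.polar Q w v = 1 := by rw [QuadraticMap.polar_comm, hvw]
      have hvv : QuadraticMap.polar Q v v = 0 := by rw [QuadraticMap.polar_self, hv]; simp
      have hww : QuadraticMap.polar Q w w = 0 := by rw [QuadraticMap.polar_self, hw]; simp
      have := hy' (x - QuadraticMap.polar Q w x • v - QuadraticMap.polar Q v x • w) (by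
        rw [hW]
        constructor
        · simp [QuadraticMap.polar_sub_right, QuadraticMap.polar_smul_right, hvv, hvw]
        · simp [QuadraticMap.polar_sub_right, QuadraticMap.polar_smul_right, hww, hwv])
      simpa [QuadraticMap.polar_sub_right, QuadraticMap.polar_smul_right, hyv, hyw] using this
    obtain ⟨k, m, qa, hqa, he⟩ := ih _ hlt (Q.comp W.subtype) rfl hnd
    exact ⟨k + 1, m, qa, hqa, hsplit.trans
      (((QuadraticMap.Equivalent.refl _).prod he).trans (witt_assemble _ k m qa))⟩


/-- Witt decomposition, existence: every non-degenerate quadratic space `(V, q)` over a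
field of characteristic ≠ 2 is isometric to `H₁ ⊥ ⋯ ⊥ H_k ⊥ V_a`, where each `Hᵢ` is a
hyperbolic plane `⟨1, −1⟩` and `V_a` is anisotropic. Non-degeneracy is stated via the
associated bilinear form `B(v,w) = (q(v+w) − q(v) − q(w))/2`. -/
theorem witt_decomposition_exists {F V : Type*} [Field F] [AddCommGroup V]
    [Module F V] [FiniteDimensional F V] (hF : (2 : F) ≠ 0)
    (Q : QuadraticForm F V)
    (hQ : ∀ v : V, (∀ w : V, QuadraticMap.polar Q v w / 2 = 0) → v = 0) :
    ∃ (k m : ℕ) (qa : QuadraticForm F (Fin m → F)),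
      qa.Anisotropic ∧
      QuadraticMap.Equivalent Q
        ((QuadraticMap.pi fun _ : Fin k =>
          QuadraticMap.weightedSumSquares F (![1, -1] : Fin 2 → F)).prod qa) := by
  exact witt_aux hF _ Q rfl (fun v h => hQ v (fun w => by rw [h w, zero_div]))
end

section
/- (Witt decomposition, uniqueness) Let F be a field of characteristic not equal to 2 and let (V, q) be a non-degenerate quadratic space over F. Suppose V ≅ H₁ ⊥ ⋯ ⊥ H_k ⊥ V_a and V ≅ H₁′ ⊥ ⋯ ⊥ H_m′ ⊥ V_a′ are two decompositions in which all Hᵢ and Hⱼ′ are hyperbolic planes and V_a, V_a′ are anisotropic. Then k = m and V_a is isometric to V_a′. -/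
namespace WittAux

open QuadraticMap

variable {F M M₁ M₂ : Type*} [Field F] [AddCommGroup M] [Module F M]
  [AddCommGroup M₁] [Module F M₁] [AddCommGroup M₂] [Module F M₂]

theorem polar_iso {Q₁ : QuadraticForm F M₁} {Q₂ : QuadraticForm F M₂}
    (e : Q₁.IsometryEquiv Q₂) (x y : M₁) : polar Q₂ (e x) (e y) = polar Q₁ x y := by
  have : e (x + y) = e x + e y := map_add e.toLinearEquiv x y
  simp only [polar, ← this, e.map_app]

theorem exists_refl (Q : QuadraticForm F M) (x : M) (hx : Q x ≠ 0) :
    ∃ τ : Q.IsometryEquiv Q, ∀ y, τ y = y - ((Q x)⁻¹ * polar Q x y) • x := by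
  have h2 : ((Q x)⁻¹ • Q.polarBilin x) x = 2 := by
    simp only [LinearMap.smul_apply, polarBilin_apply_apply, polar_self, two_nsmul, smul_eq_mul]
    field_simp
    ring
  refine ⟨⟨Module.reflection h2, ?_⟩, ?_⟩
  · intro y
    show Q (Module.reflection h2 y) = Q y
    rw [Module.reflection_apply, sub_eq_add_neg, ← neg_smul, QuadraticMap.map_add Q,
      QuadraticMap.map_smul, polar_smul_right, polar_comm Q y x]
    simp only [LinearMap.smul_apply, polarBilin_apply_apply, smul_eq_mul]
    field_simp
    ring
  · intro y
    show Module.reflection h2 y = _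
    rw [Module.reflection_apply]
    simp

theorem exists_swap (hF : (2 : F) ≠ 0) (Q : QuadraticForm F M) (u v : M) (huv : Q u = Q v)
    (hu : Q u ≠ 0) : ∃ τ : Q.IsometryEquiv Q, τ v = u ∨ τ v = -u := by
  have e1 : Q (u - v) = 2 * Q v - polar Q u v := by
    rw [sub_eq_add_neg, QuadraticMap.map_add Q, QuadraticMap.map_neg, polar_neg_right, huv]; ring
  have e2 : Q (u + v) = 2 * Q v + polar Q u v := by
    rw [QuadraticMap.map_add Q, huv]; ring
  by_cases h : Q (u - v) = 0
  · have h' : Q (u + v) ≠ 0 := by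
      intro h'
      apply hu
      have : (2 * 2) * Q u = 0 := by rw [huv]; linear_combination h + h' - e1 - e2
      simpa [hF] using this
    obtain ⟨τ, hτ⟩ := exists_refl Q (u + v) h'
    refine ⟨τ, Or.inr ?_⟩
    have : (Q (u + v))⁻¹ * polar Q (u + v) v = 1 := by
      rw [polar_add_left, polar_self, two_nsmul, inv_mul_eq_one₀ h', e2]; ring
    rw [hτ, this, one_smul]; abel
  · obtain ⟨τ, hτ⟩ := exists_refl Q (u - v) h
    refine ⟨τ, Or.inl ?_⟩
    have : (Q (u - v))⁻¹ * polar Q (u - v) v = -1 := by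
      rw [polar_sub_left, polar_self, two_nsmul, inv_mul_eq_iff_eq_mul₀ h, e1]; ring
    rw [hτ, this, neg_one_smul]; abel

theorem fst_zero (hF : (2 : F) ≠ 0) {a : F} (ha : a ≠ 0) {Q₁ : QuadraticForm F M₁}
    {Q₂ : QuadraticForm F M₂}
    (f : ((a • (sq : QuadraticForm F F)).prod Q₁).IsometryEquiv
      ((a • (sq : QuadraticForm F F)).prod Q₂))
    (hf : f (1, 0) = (1, 0) ∨ f (1, 0) = -(1, 0)) (m : M₁) : f (0, m) = (0, (f (0, m)).2) := by
  have h := polar_iso f (1, 0) (0, m)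
  have h0 := f.map_app (0, m)
  simp only [prod_apply, QuadraticMap.smul_apply, sq_apply, smul_eq_mul] at h0
  have key : (f (0, m)).1 = 0 := by
    rcases hf with hf | hf
    · rw [hf] at h
      simp [polar] at h
      have : (a * 2) * (f (0, m)).1 = 0 := by linear_combination h - h0
      simpa [hF, ha] using this
    · rw [hf] at h
      simp [polar] at h
      have : (a * 2) * (f (0, m)).1 = 0 := by linear_combination -h + h0
      simpa [hF, ha] using this
  exact Prod.ext key rfl

theorem cancel_one (hF : (2 : F) ≠ 0) {a : F} (ha : a ≠ 0) {Q₁ : QuadraticForm F M₁}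
    {Q₂ : QuadraticForm F M₂}
    (h : ((a • (sq : QuadraticForm F F)).prod Q₁).Equivalent
      ((a • (sq : QuadraticForm F F)).prod Q₂)) : Q₁.Equivalent Q₂ := by
  obtain ⟨e⟩ := h
  obtain ⟨τ, hτ⟩ := exists_swap hF ((a • (sq : QuadraticForm F F)).prod Q₂) (1, 0) (e (1, 0))
    (by rw [e.map_app]; simp) (by simpa using ha)
  obtain ⟨f, hf⟩ : ∃ f : ((a • (sq : QuadraticForm F F)).prod Q₁).IsometryEquiv
      ((a • (sq : QuadraticForm F F)).prod Q₂), f (1, 0) = (1, 0) ∨ f (1, 0) = -(1, 0) :=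
    ⟨e.trans τ, hτ⟩
  have hg : f.symm (1, 0) = (1, 0) ∨ f.symm (1, 0) = -(1, 0) := by
    rcases hf with hf | hf
    · left; rw [f.symm_apply_eq, hf]
    · right
      have : f (-(1, 0)) = - f (1, 0) := map_neg f.toLinearEquiv _
      rw [f.symm_apply_eq, this, hf, neg_neg]
  have hf0 := fst_zero hF ha f hf
  have hg0 := fst_zero hF ha f.symm hg
  refine ⟨⟨LinearEquiv.ofLinearMap
    (LinearMap.snd F F M₂ ∘ₗ f.toLinearEquiv.toLinearMap ∘ₗ LinearMap.inr F F M₁)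
    (LinearMap.snd F F M₁ ∘ₗ f.symm.toLinearEquiv.toLinearMap ∘ₗ LinearMap.inr F F M₂) ?_ ?_, ?_⟩⟩
  · ext m
    show (f (0, (f.symm (0, m)).2)).2 = m
    rw [← hg0, f.apply_symm_apply]
  · ext m
    show (f.symm (0, (f (0, m)).2)).2 = m
    rw [← hf0, f.symm_apply_apply]
  · intro m
    show Q₂ (f (0, m)).2 = Q₁ m
    have := f.map_app (0, m)
    rw [hf0] at this
    simpa using this

/-- `k` hyperbolic planes. -/
noncomputable abbrev hyp (F : Type*) [Field F] (k : ℕ) : QuadraticForm F (Fin k → Fin 2 → F) :=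
  QuadraticMap.pi fun _ : Fin k => weightedSumSquares F (![1, -1] : Fin 2 → F)

theorem hyp_succ (k : ℕ) (q : QuadraticForm F M) :
    ((hyp F (k + 1)).prod q).Equivalent
      (((1 : F) • (sq : QuadraticForm F F)).prod
        (((-1 : F) • (sq : QuadraticForm F F)).prod ((hyp F k).prod q))) := by
  refine ⟨⟨
    { toFun := fun x => (x.1 0 0, x.1 0 1, fun i => x.1 i.succ, x.2)
      invFun := fun y => (Fin.cons ![y.1, y.2.1] y.2.2.1, y.2.2.2)
      map_add' := fun _ _ => rfl
      map_smul' := fun _ _ => rfl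
      left_inv := ?_
      right_inv := ?_ }, ?_⟩⟩
  · rintro ⟨x, y⟩
    refine Prod.ext ?_ rfl
    funext i j
    refine Fin.cases ?_ (fun i => ?_) i
    · fin_cases j <;> rfl
    · rfl
  · rintro ⟨a, b, x, y⟩
    rfl
  · rintro ⟨x, y⟩
    simp [Fin.sum_univ_succ, weightedSumSquares_apply]
    ring

theorem hyp_zero (q : QuadraticForm F M) : ((hyp F 0).prod q).Equivalent q := by
  refine ⟨⟨
    { toFun := fun x => x.2
      invFun := fun y => (0, y)
      map_add' := fun _ _ => rfl
      map_smul' := fun _ _ => rfl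
      left_inv := fun x => Prod.ext (Subsingleton.elim _ _) rfl
      right_inv := fun _ => rfl }, ?_⟩⟩
  rintro ⟨x, y⟩
  simp

theorem not_aniso {q₁ : QuadraticForm F M₁} {q₂ : QuadraticForm F M₂} (h : q₁.Anisotropic) {k : ℕ}
    (e : q₁.Equivalent ((hyp F (k + 1)).prod q₂)) : False := by
  obtain ⟨e⟩ := e.trans (hyp_succ k q₂)
  have h0 : q₁ (e.symm (1, 1, 0)) = 0 := by
    rw [e.symm.map_app]; simp
  have h1 := h _ h0
  rw [e.symm_apply_eq] at h1
  have : e 0 = 0 := map_zero e.toLinearEquiv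
  rw [this] at h1
  exact one_ne_zero (congrArg Prod.fst h1)

theorem main (hF : (2 : F) ≠ 0) {q₁ : QuadraticForm F M₁} {q₂ : QuadraticForm F M₂}
    (ha₁ : q₁.Anisotropic) (ha₂ : q₂.Anisotropic) (k m : ℕ)
    (h : ((hyp F k).prod q₁).Equivalent ((hyp F m).prod q₂)) : k = m ∧ q₁.Equivalent q₂ := by
  induction k generalizing m with
  | zero =>
    cases m with
    | zero => exact ⟨rfl, ((hyp_zero q₁).symm.trans h).trans (hyp_zero q₂)⟩
    | succ m => exact (not_aniso ha₁ ((hyp_zero q₁).symm.trans h)).elim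
  | succ k ih =>
    cases m with
    | zero => exact (not_aniso ha₂ ((hyp_zero q₂).symm.trans h.symm)).elim
    | succ m =>
      have h1 := ((hyp_succ k q₁).symm.trans h).trans (hyp_succ m q₂)
      obtain ⟨h2, h3⟩ := ih m (cancel_one hF (by simp) (cancel_one hF one_ne_zero h1))
      exact ⟨by rw [h2], h3⟩

end WittAux

/-- Witt decomposition, uniqueness: if a non-degenerate quadratic space `(V, q)` is
isometric both to `H^{⊥k} ⊥ V_a` and to `H^{⊥m} ⊥ V_a′` with `V_a`, `V_a′` anisotropic
(`H` the hyperbolic plane `⟨1, −1⟩`), then `k = m` and `V_a ≅ V_a′`. -/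
theorem witt_decomposition_unique {F V Va Va' : Type*} [Field F]
    [AddCommGroup V] [Module F V] [FiniteDimensional F V]
    [AddCommGroup Va] [Module F Va] [FiniteDimensional F Va]
    [AddCommGroup Va'] [Module F Va'] [FiniteDimensional F Va']
    (hF : (2 : F) ≠ 0)
    (Q : QuadraticForm F V)
    (hQ : ∀ v : V, (∀ w : V, QuadraticMap.polar Q v w / 2 = 0) → v = 0)
    {k m : ℕ} (qa : QuadraticForm F Va) (qa' : QuadraticForm F Va')
    (hqa : qa.Anisotropic) (hqa' : qa'.Anisotropic)
    (h₁ : QuadraticMap.Equivalent Q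
      ((QuadraticMap.pi fun _ : Fin k =>
        QuadraticMap.weightedSumSquares F (![1, -1] : Fin 2 → F)).prod qa))
    (h₂ : QuadraticMap.Equivalent Q
      ((QuadraticMap.pi fun _ : Fin m =>
        QuadraticMap.weightedSumSquares F (![1, -1] : Fin 2 → F)).prod qa')) :
    k = m ∧ QuadraticMap.Equivalent qa qa' := by
  exact WittAux.main hF hqa hqa' k m (h₁.symm.trans h₂)
end
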